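/- For every nonnegative integer n, the number sT(3n+2) of partition pairs (π₁,π₂) ∈ 𝒮𝒯 with |π₁|+|π₂| = 3n+2 is divisible by 3. -/

import Mathlib

open scoped BigOperators

noncomputable section

/-- A partition is a finite multiset of positive integers. -/
def IsPartition (π : Multiset ℕ) : Prop := ∀ x ∈ π, 0 < x

/-- The smallest part of a partition, with the convention `s(∅) = ∞`. -/
def sPart (π : Multiset ℕ) : ℕ∞ := (π.map (fun x => (x : ℕ∞))).inf

/-- The largest part of a partition, with the convention `ℓ(∅) = 0`. -/
def lPart (π : Multiset ℕ) : ℕ := π.sup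

/-- Membership in the set 𝒮𝒯 of partition pairs: π₁ is nonempty,
`s(π₁) ≤ s(π₂)`, and `ℓ(π₂) < 2·s(π₁)`. -/
def InST (p : Multiset ℕ × Multiset ℕ) : Prop :=
  IsPartition p.1 ∧ IsPartition p.2 ∧ p.1 ≠ 0 ∧
    sPart p.1 ≤ sPart p.2 ∧ (lPart p.2 : ℕ∞) < 2 * sPart p.1

/-- `sT n` is the number of pairs `(π₁, π₂) ∈ 𝒮𝒯` with `|π₁| + |π₂| = n`. -/
def sT (n : ℕ) : ℕ :=
  {p : Multiset ℕ × Multiset ℕ | InST p ∧ p.1.sum + p.2.sum = n}.ncard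

open PowerSeries Finset

/-!
Write `(q)_k` for `(q; q)_k`. Sorting the pairs by the smallest part `m + 1` of `π₁` gives the
generating function `∑ m, q ^ (m + 1) (q)_m ^ 2 / ((q)_{2m+1} (q)_∞)`. Multiply it by `(q)_∞ ^ 3`,
expand `(q)_m ^ 2` by a finite form of Jacobi's identity for `(q)_∞ ^ 3`, and sum over `m` first:
what appears is `(q)_∞ ^ 2 ∑ s, q ^ s / ((q)_s (q)_{s+k})`, a partial theta series. The result is a
double series in which no exponent is congruent to `2` modulo `3`. Modulo `3` the factor
`(q)_∞ ^ 3` is a series in `q ^ 3`, so dividing by it keeps the exponents congruent to `2` absent.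
-/

section GaussianBinomial

variable {R : Type*} [CommRing R] (q : R)

/-- The `q`-Pochhammer symbol `(q; q)_k = (1 - q) (1 - q ^ 2) ⋯ (1 - q ^ k)`. -/
def qPochhammer (k : ℕ) : R := ∏ i ∈ range k, (1 - q ^ (i + 1))

lemma qPochhammer_succ (k : ℕ) :
    qPochhammer q (k + 1) = qPochhammer q k * (1 - q ^ (k + 1)) :=
  prod_range_succ ..

lemma qPochhammer_mul_prod_Ico {m n : ℕ} (h : m ≤ n) :
    qPochhammer q m * ∏ i ∈ Ico m n, (1 - q ^ (i + 1)) = qPochhammer q n :=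
  prod_range_mul_prod_Ico _ h

/-- The Gaussian binomial coefficient `[n, k]_q`, defined by the `q`-Pascal recurrence so that it
makes sense for every element `q` of a ring and vanishes for `n < k`. -/
def gaussBinom : ℕ → ℕ → R
  | _, 0 => 1
  | 0, _ + 1 => 0
  | n + 1, k + 1 => gaussBinom n k + q ^ (k + 1) * gaussBinom n (k + 1)

lemma gaussBinom_zero_right (n : ℕ) : gaussBinom q n 0 = 1 := by
  cases n <;> rfl

lemma gaussBinom_succ_succ (n k : ℕ) :
    gaussBinom q (n + 1) (k + 1) = gaussBinom q n k + q ^ (k + 1) * gaussBinom q n (k + 1) :=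
  rfl

lemma gaussBinom_eq_zero_of_lt {n k : ℕ} (h : n < k) : gaussBinom q n k = 0 := by
  induction n generalizing k with
  | zero => obtain ⟨k, rfl⟩ := Nat.exists_eq_succ_of_ne_zero h.ne'; rfl
  | succ n ih =>
    obtain ⟨k, rfl⟩ := Nat.exists_eq_succ_of_ne_zero (Nat.ne_zero_of_lt h)
    rw [gaussBinom_succ_succ, ih (by omega), ih (by omega), mul_zero, add_zero]

lemma gaussBinom_self (n : ℕ) : gaussBinom q n n = 1 := by
  induction n with
  | zero => rfl
  | succ n ih =>
    rw [gaussBinom_succ_succ, ih, gaussBinom_eq_zero_of_lt q n.lt_succ_self, mul_zero, add_zero]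

lemma one_sub_pow_mul_gaussBinom_succ (n k : ℕ) :
    (1 - q ^ (k + 1)) * gaussBinom q n (k + 1) = (1 - q ^ (n - k)) * gaussBinom q n k := by
  induction n generalizing k with
  | zero => simp [gaussBinom_eq_zero_of_lt q k.succ_pos]
  | succ n ih =>
    cases k with
    | zero =>
      have h := ih 0
      simp only [gaussBinom_succ_succ, gaussBinom_zero_right, Nat.sub_zero] at h ⊢
      linear_combination q * h
    | succ k =>
      rw [gaussBinom_succ_succ, gaussBinom_succ_succ, Nat.succ_sub_succ]
      rcases lt_or_ge n (k + 1) with hn | hn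
      · have h := ih k
        rw [gaussBinom_eq_zero_of_lt q hn] at h ⊢
        rw [gaussBinom_eq_zero_of_lt q (hn.trans (Nat.lt_succ_self _))]
        linear_combination h
      · obtain ⟨d, rfl⟩ := Nat.exists_eq_add_of_le' hn
        have h₀ := ih k
        have h₁ := ih (k + 1)
        rw [show d + (k + 1) - k = d + 1 by omega] at h₀ ⊢
        rw [show d + (k + 1) - (k + 1) = d by omega] at h₁
        linear_combination h₀ + q ^ (k + 2) * h₁

lemma gaussBinom_succ_succ' (n k : ℕ) :
    gaussBinom q (n + 1) (k + 1) = q ^ (n - k) * gaussBinom q n k + gaussBinom q n (k + 1) := by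
  linear_combination gaussBinom_succ_succ q n k - one_sub_pow_mul_gaussBinom_succ q n k

lemma gaussBinom_symm {n k : ℕ} (h : k ≤ n) : gaussBinom q n (n - k) = gaussBinom q n k := by
  induction n generalizing k with
  | zero => rw [Nat.le_zero.mp h]
  | succ n ih =>
    rcases k with _ | k
    · rw [Nat.sub_zero, gaussBinom_self, gaussBinom_zero_right]
    rcases h.eq_or_lt with h | h
    · obtain rfl := Nat.succ.inj h
      rw [Nat.sub_self, gaussBinom_self, gaussBinom_zero_right]
    · obtain ⟨d, rfl⟩ := Nat.exists_eq_add_of_le' (show k + 1 ≤ n by omega)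
      have h₀ := ih (k := k) (by omega)
      have h₁ := ih (k := k + 1) (by omega)
      rw [show d + (k + 1) - k = d + 1 by omega] at h₀
      rw [show d + (k + 1) - (k + 1) = d by omega] at h₁
      rw [show d + (k + 1) + 1 - (k + 1) = d + 1 by omega, gaussBinom_succ_succ',
        gaussBinom_succ_succ, h₀, h₁, show d + (k + 1) - d = k + 1 by omega, add_comm]

lemma gaussBinom_mul_qPochhammer_mul_qPochhammer (a b : ℕ) :
    gaussBinom q (a + b) a * qPochhammer q a * qPochhammer q b = qPochhammer q (a + b) := by
  induction a generalizing b with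
  | zero => simp [gaussBinom_zero_right, qPochhammer]
  | succ a ih =>
    have h := one_sub_pow_mul_gaussBinom_succ q (a + (b + 1)) a
    rw [Nat.add_sub_cancel_left] at h
    rw [show a + 1 + b = a + (b + 1) by ring, ← ih (b + 1), qPochhammer_succ q a,
      qPochhammer_succ q b]
    linear_combination qPochhammer q a * qPochhammer q b * h

lemma gaussBinom_add_two_add_two (n k : ℕ) :
    gaussBinom q (n + 2) (k + 2) = q ^ (n - k) * gaussBinom q n k +
      (1 + q ^ (n + 1)) * gaussBinom q n (k + 1) + q ^ (k + 2) * gaussBinom q n (k + 2) := by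
  rw [gaussBinom_succ_succ, gaussBinom_succ_succ', gaussBinom_succ_succ' q n (k + 1)]
  rcases lt_or_ge n (k + 1) with h | h
  · rw [gaussBinom_eq_zero_of_lt q h]
    ring
  · rw [show n + 1 = k + 2 + (n - (k + 1)) by omega]
    ring

end GaussianBinomial

section FiniteJacobi

variable {R : Type*} [CommRing R] (q : R)

/-- The coefficient of `2 * j + 1` in the finite form `sum_odd_mul_jacobiTerm` of Jacobi's identity
`(q; q)_∞ ^ 3 = ∑ j, (-1) ^ j (2 j + 1) q ^ (j (j + 1) / 2)`. The triangular number
`j (j + 1) / 2` is written `(j + 1).choose 2`. -/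
def jacobiTerm (m j : ℕ) : R :=
  (-1) ^ j * q ^ (j + 1).choose 2 * gaussBinom q (2 * m + 1) (m + 1 + j)

lemma succ_choose_two (n : ℕ) : (n + 1).choose 2 = n.choose 2 + n := by
  rw [Nat.choose_succ_succ' n 1, Nat.choose_one_right, add_comm]

lemma jacobiTerm_eq_zero_of_lt {m j : ℕ} (h : m < j) : jacobiTerm q m j = 0 := by
  rw [jacobiTerm, gaussBinom_eq_zero_of_lt q (by omega), mul_zero]

lemma jacobiTerm_succ_zero (m : ℕ) :
    jacobiTerm q (m + 1) 0 = (1 + q ^ (2 * m + 2)) * jacobiTerm q m 0 -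
      q ^ (m + 1) * (jacobiTerm q m 1 - jacobiTerm q m 0) := by
  have hsymm := gaussBinom_symm q (show m ≤ 2 * m + 1 by omega)
  rw [show 2 * m + 1 - m = m + 1 by omega] at hsymm
  have hrec := gaussBinom_add_two_add_two q (2 * m + 1) m
  rw [← hsymm, show 2 * m + 1 - m = m + 1 by omega] at hrec
  simp only [jacobiTerm, succ_choose_two, Nat.choose_zero_succ]
  linear_combination hrec

lemma jacobiTerm_succ_succ (m j : ℕ) :
    jacobiTerm q (m + 1) (j + 1) = (1 + q ^ (2 * m + 2)) * jacobiTerm q m (j + 1) -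
      q ^ (m + 1) * (jacobiTerm q m j + jacobiTerm q m (j + 2)) := by
  have hrec := gaussBinom_add_two_add_two q (2 * m + 1) (m + 1 + j)
  have hpow : q ^ (j + 1) * q ^ (2 * m + 1 - (m + 1 + j)) * gaussBinom q (2 * m + 1) (m + 1 + j) =
      q ^ (m + 1) * gaussBinom q (2 * m + 1) (m + 1 + j) := by
    rcases lt_or_ge m j with h | h
    · rw [gaussBinom_eq_zero_of_lt q (show 2 * m + 1 < m + 1 + j by omega), mul_zero, mul_zero]
    · rw [← pow_add, show j + 1 + (2 * m + 1 - (m + 1 + j)) = m + 1 by omega]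
  simp only [jacobiTerm, succ_choose_two (j + 2), succ_choose_two (j + 1)]
  rw [show 2 * (m + 1) + 1 = 2 * m + 1 + 2 by ring,
    show m + 1 + 1 + (j + 1) = m + 1 + j + 2 by ring]
  linear_combination (-1) ^ (j + 1) * q ^ ((j + 1).choose 2) * (q ^ (j + 1) * hrec + hpow)

lemma sum_odd_mul_of_recurrence {a p : R} {c c' : ℕ → R}
    (hzero : c' 0 = a * c 0 - p * (c 1 - c 0))
    (hsucc : ∀ j, c' (j + 1) = a * c (j + 1) - p * (c j + c (j + 2))) (n : ℕ) :
    ∑ j ∈ range (n + 1), (2 * j + 1) * c' j =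
      (a - 2 * p) * ∑ j ∈ range (n + 1), (2 * j + 1) * c j -
        p * ((2 * n + 1) * c (n + 1) - (2 * n + 3) * c n) := by
  induction n with
  | zero =>
    simp only [zero_add, sum_range_one, Nat.cast_zero]
    linear_combination hzero
  | succ n ih =>
    rw [sum_range_succ, sum_range_succ _ (n + 1)]
    push_cast
    linear_combination ih + (2 * (n : R) + 3) * hsucc n

theorem sum_odd_mul_jacobiTerm (m : ℕ) :
    ∑ j ∈ range (m + 1), (2 * j + 1) * jacobiTerm q m j = qPochhammer q m ^ 2 := by
  induction m with
  | zero => simp [jacobiTerm, gaussBinom_self, qPochhammer]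
  | succ m ih =>
    have h := sum_odd_mul_of_recurrence (jacobiTerm_succ_zero q m) (jacobiTerm_succ_succ q m)
      (m + 1)
    rw [sum_range_succ (fun j : ℕ => (2 * (j : R) + 1) * jacobiTerm q m j),
      jacobiTerm_eq_zero_of_lt q (show m < m + 1 by omega),
      jacobiTerm_eq_zero_of_lt q (show m < m + 1 + 1 by omega), ih] at h
    rw [h, qPochhammer_succ]
    ring

end FiniteJacobi

section QSeries

variable (R : Type*) [CommRing R]

/-- The power series `1 / (X; X)_k`. -/
def invQPochhammer (k : ℕ) : R⟦X⟧ := invOfUnit (qPochhammer X k) 1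

lemma qPochhammer_mul_invQPochhammer (k : ℕ) : qPochhammer X k * invQPochhammer R k = 1 :=
  mul_invOfUnit _ _ (by simp [qPochhammer])

lemma invQPochhammer_eq_of_mul_eq_one {k : ℕ} {f : R⟦X⟧} (h : qPochhammer X k * f = 1) :
    invQPochhammer R k = f := by
  linear_combination f * qPochhammer_mul_invQPochhammer R k - invQPochhammer R k * h

lemma invQPochhammer_zero : invQPochhammer R 0 = 1 :=
  invQPochhammer_eq_of_mul_eq_one R (by simp [qPochhammer])

lemma invQPochhammer_eq_mul_succ (k : ℕ) :
    invQPochhammer R k = (1 - X ^ (k + 1)) * invQPochhammer R (k + 1) :=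
  invQPochhammer_eq_of_mul_eq_one R <| by
    rw [← mul_assoc, ← qPochhammer_succ, qPochhammer_mul_invQPochhammer]

lemma gaussBinom_mul_invQPochhammer (a b : ℕ) :
    gaussBinom X (a + b) a * invQPochhammer R (a + b) =
      invQPochhammer R a * invQPochhammer R b := by
  have h := gaussBinom_mul_qPochhammer_mul_qPochhammer (X : R⟦X⟧) a b
  have ha := qPochhammer_mul_invQPochhammer R a
  have hb := qPochhammer_mul_invQPochhammer R b
  have hab := qPochhammer_mul_invQPochhammer R (a + b)
  calc gaussBinom X (a + b) a * invQPochhammer R (a + b)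
    _ = gaussBinom X (a + b) a * (qPochhammer X a * invQPochhammer R a) *
          (qPochhammer X b * invQPochhammer R b) * invQPochhammer R (a + b) := by
        rw [ha, hb, mul_one, mul_one]
    _ = gaussBinom X (a + b) a * qPochhammer X a * qPochhammer X b * invQPochhammer R (a + b) *
          (invQPochhammer R a * invQPochhammer R b) := by ring
    _ = invQPochhammer R a * invQPochhammer R b := by rw [h, hab, one_mul]

lemma jacobiTerm_mul_invQPochhammer (j s : ℕ) :
    jacobiTerm X (j + s) j * invQPochhammer R (2 * (j + s) + 1) =
      (-1) ^ j * X ^ (j + 1).choose 2 *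
        (invQPochhammer R s * invQPochhammer R (s + (2 * j + 1))) := by
  rw [jacobiTerm, show 2 * (j + s) + 1 = s + (2 * j + 1) + s by ring,
    show j + s + 1 + j = s + (2 * j + 1) by ring, mul_assoc, gaussBinom_mul_invQPochhammer]
  ring

lemma X_pow_succ_dvd_qPochhammer_sub {m n : ℕ} (h : m ≤ n) :
    (X : R⟦X⟧) ^ (m + 1) ∣ qPochhammer X n - qPochhammer X m := by
  induction n, h using Nat.le_induction with
  | base => simp
  | succ n hmn ih =>
    rw [qPochhammer_succ, mul_one_sub, sub_right_comm]
    exact ih.sub ((pow_dvd_pow X (by omega)).mul_left _)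

lemma X_pow_succ_dvd_qPochhammer_mul_invQPochhammer_sub_one {m a b : ℕ} (ha : m ≤ a)
    (hb : m ≤ b) : X ^ (m + 1) ∣ qPochhammer X a * invQPochhammer R b - 1 := by
  have hab := (X_pow_succ_dvd_qPochhammer_sub R ha).sub (X_pow_succ_dvd_qPochhammer_sub R hb)
  rw [sub_sub_sub_cancel_right] at hab
  rw [← qPochhammer_mul_invQPochhammer R b, ← sub_mul]
  exact hab.mul_right _

/-- The truncation to `s ≤ M` of the series `∑ s, X ^ s / ((X; X)_s (X; X)_{s + k})`, which is
`1 / (X; X)_∞ ^ 2` times the partial theta series `∑ r, (-1) ^ r X ^ (r (r + 1) / 2 + k r)`. -/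
def partialThetaQuotient (M k : ℕ) : R⟦X⟧ :=
  ∑ s ∈ range (M + 1), X ^ s * (invQPochhammer R s * invQPochhammer R (s + k))

lemma partialThetaQuotient_add_X_pow_mul (M k : ℕ) :
    partialThetaQuotient R M k + X ^ (k + 1) * partialThetaQuotient R M (k + 1) =
      invQPochhammer R M * invQPochhammer R (M + k + 1) := by
  unfold partialThetaQuotient
  induction M with
  | zero =>
    simp only [zero_add, sum_range_one, invQPochhammer_zero]
    rw [invQPochhammer_eq_mul_succ R k]
    ring
  | succ M ih =>
    rw [sum_range_succ, sum_range_succ _ (M + 1), show M + 1 + k = M + k + 1 by ring,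
      show M + 1 + (k + 1) = M + k + 1 + 1 by ring]
    rw [invQPochhammer_eq_mul_succ R M, invQPochhammer_eq_mul_succ R (M + k + 1)] at ih
    rw [invQPochhammer_eq_mul_succ R (M + k + 1)]
    linear_combination ih

lemma partialThetaQuotient_eq_sum_add (M k t : ℕ) :
    partialThetaQuotient R M k =
      ∑ r ∈ range t, (-1) ^ r * X ^ ((r + 1).choose 2 + k * r) *
        (invQPochhammer R M * invQPochhammer R (M + (k + r) + 1)) +
      (-1) ^ t * X ^ ((t + 1).choose 2 + k * t) * partialThetaQuotient R M (k + t) := by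
  induction t with
  | zero => simp
  | succ t ih =>
    rw [ih, sum_range_succ, add_assoc]
    congr 1
    rw [← partialThetaQuotient_add_X_pow_mul, succ_choose_two (t + 1), ← add_assoc k t 1]
    ring

lemma X_pow_dvd_qPochhammer_sq_mul_partialThetaQuotient_sub {M N : ℕ} (h : M ≤ N) (k : ℕ) :
    X ^ (M + 1) ∣ qPochhammer X N ^ 2 * partialThetaQuotient R M k -
      ∑ r ∈ range (M + 1), (-1) ^ r * X ^ ((r + 1).choose 2 + k * r) := by
  have hone (r : ℕ) : X ^ (M + 1) ∣ qPochhammer X N * invQPochhammer R M *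
      (qPochhammer X N * invQPochhammer R (M + (k + r) + 1)) - 1 := by
    have h₁ := X_pow_succ_dvd_qPochhammer_mul_invQPochhammer_sub_one R h le_rfl
    have h₂ := X_pow_succ_dvd_qPochhammer_mul_invQPochhammer_sub_one R h
      (show M ≤ M + (k + r) + 1 by omega)
    convert (h₁.mul_right (qPochhammer X N * invQPochhammer R (M + (k + r) + 1))).add h₂ using 1
    ring
  have htail : (X : R⟦X⟧) ^ (M + 1) ∣ X ^ ((M + 1 + 1).choose 2 + k * (M + 1)) :=
    pow_dvd_pow X (by rw [succ_choose_two]; omega)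
  rw [partialThetaQuotient_eq_sum_add R M k (M + 1), mul_add, mul_sum, add_sub_right_comm,
    ← sum_sub_distrib]
  refine (dvd_sum fun r _ => ?_).add (((htail.mul_left _).mul_right _).mul_left _)
  convert (hone r).mul_left ((-1) ^ r * X ^ ((r + 1).choose 2 + k * r)) using 1
  ring

/-- The sum `∑ m < N, X ^ (m + 1) / ((1 - X ^ (m + 1)) ⋯ (1 - X ^ N) ⋅
(1 - X ^ (m + 1)) ⋯ (1 - X ^ (2 m + 1)))`, whose `m`-th term counts the pairs in `𝒮𝒯` with
`s(π₁) = m + 1` and `ℓ(π₁) ≤ N`. -/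
def truncatedSTSeries (N : ℕ) : R⟦X⟧ :=
  ∑ m ∈ range N, X ^ (m + 1) *
    (qPochhammer X m * invQPochhammer R N * (qPochhammer X m * invQPochhammer R (2 * m + 1)))

/-- The part of the Hecke-type double series
`∑ j r, (-1) ^ (j + r) (2 j + 1) X ^ ((j + 1) (j + 2) / 2 + r (r + 1) / 2 + (2 j + 1) r)`
with `j + r < N`. -/
def truncatedHeckeSeries (N : ℕ) : R⟦X⟧ :=
  ∑ j ∈ range N, ∑ r ∈ range (N - j),
    C ((2 * (j : R) + 1) * (-1) ^ (j + r)) *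
      X ^ ((j + 2).choose 2 + (r + 1).choose 2 + (2 * j + 1) * r)

lemma truncatedSTSeries_mul_qPochhammer_cube (N : ℕ) :
    truncatedSTSeries R N * qPochhammer X N ^ 3 =
      ∑ j ∈ range N, C ((2 * (j : R) + 1) * (-1) ^ j) * X ^ (j + 2).choose 2 *
        (qPochhammer X N ^ 2 * partialThetaQuotient R (N - 1 - j) (2 * j + 1)) := by
  -- The finite Jacobi identity, after which the sum over `m = j + s` is carried out for fixed `j`.
  have hterm (m : ℕ) : X ^ (m + 1) * (qPochhammer X m * invQPochhammer R N *
        (qPochhammer X m * invQPochhammer R (2 * m + 1))) * qPochhammer X N ^ 3 =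
      ∑ j ∈ Ico 0 (m + 1), X ^ (m + 1) * qPochhammer X N ^ 2 * ((2 * (j : R⟦X⟧) + 1) *
        (jacobiTerm X m j * invQPochhammer R (2 * m + 1))) := by
    simp_rw [← mul_assoc _ (jacobiTerm X m _), ← mul_sum, ← sum_mul]
    rw [Nat.Ico_zero_eq_range, sum_odd_mul_jacobiTerm]
    linear_combination X ^ (m + 1) * qPochhammer X m ^ 2 * invQPochhammer R (2 * m + 1) *
      qPochhammer X N ^ 2 * qPochhammer_mul_invQPochhammer R N
  rw [truncatedSTSeries, sum_mul, sum_congr rfl fun m _ => hterm m, ← Nat.Ico_zero_eq_range,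
    ← sum_Ico_Ico_comm]
  refine sum_congr rfl fun (j : ℕ) hj => ?_
  obtain ⟨M, rfl⟩ := Nat.exists_eq_add_of_lt (mem_Ico.mp hj).2
  rw [sum_Ico_eq_sum_range, partialThetaQuotient, mul_sum, mul_sum,
    show j + M + 1 - j = j + M + 1 - 1 - j + 1 by omega]
  refine sum_congr rfl fun s _ => ?_
  rw [jacobiTerm_mul_invQPochhammer, succ_choose_two (j + 1)]
  simp only [map_mul, map_add, map_pow, map_neg, map_one, map_natCast, map_ofNat]
  ring

theorem X_pow_succ_dvd_truncatedSTSeries_mul_cube_sub_truncatedHeckeSeries (N : ℕ) :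
    X ^ (N + 1) ∣
      truncatedSTSeries R N * qPochhammer X N ^ 3 - truncatedHeckeSeries R N := by
  rw [truncatedSTSeries_mul_qPochhammer_cube, truncatedHeckeSeries, ← sum_sub_distrib]
  refine dvd_sum fun j hj => ?_
  obtain ⟨M, rfl⟩ := Nat.exists_eq_add_of_lt (mem_range.mp hj)
  rw [show j + M + 1 - 1 - j = M by omega, show j + M + 1 - j = M + 1 by omega]
  have htheta := X_pow_dvd_qPochhammer_sq_mul_partialThetaQuotient_sub R
    (show M ≤ j + M + 1 by omega) (2 * j + 1)
  have hpow : (X : R⟦X⟧) ^ (j + M + 1 + 1) ∣ X ^ (j + 2).choose 2 * X ^ (M + 1) := by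
    rw [← pow_add]
    exact pow_dvd_pow X (by rw [succ_choose_two]; omega)
  convert (hpow.trans (mul_dvd_mul_left _ htheta)).mul_left (C ((2 * (j : R) + 1) * (-1) ^ j))
    using 1
  rw [mul_sub, mul_sub, mul_sum, mul_sum]
  congr 1
  · ring
  · refine sum_congr rfl fun r _ => ?_
    simp only [map_mul, map_add, map_pow, map_neg, map_one, map_natCast, map_ofNat]
    ring

end QSeries

section CubeModThree

lemma heckeExponent_mod_three_ne_two (j r : ℕ) :
    ((j + 2).choose 2 + (r + 1).choose 2 + (2 * j + 1) * r) % 3 ≠ 2 := by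
  have htriangle (n : ℕ) : ((n + 1).choose 2 * 2 : ZMod 3) = (n + 1) * n := by
    have h := Nat.add_one_mul_choose_eq n 1
    simp only [Nat.choose_one_right, Nat.reduceAdd] at h
    exact_mod_cast congrArg (Nat.cast (R := ZMod 3)) h.symm
  -- Twice the exponent is `(j - r) ^ 2 + 2` modulo `3`.
  have hsq : ∀ x : ZMod 3, x ^ 2 ≠ 2 := by decide
  have hthree : (3 : ZMod 3) = 0 := rfl
  intro h
  have h' : (((j + 2).choose 2 + (r + 1).choose 2 + (2 * j + 1) * r : ℕ) : ZMod 3) = (2 : ℕ) :=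
    (ZMod.natCast_eq_natCast_iff' _ _ 3).mpr h
  push_cast at h'
  have hj := htriangle (j + 1)
  push_cast at hj
  refine hsq (j - r) ?_
  linear_combination 2 * h' - hj - htriangle r - (j + r + 2 * j * r) * hthree

lemma coeff_truncatedHeckeSeries_eq_zero (R : Type*) [CommRing R] (N : ℕ) {d : ℕ}
    (hd : d % 3 = 2) : coeff d (truncatedHeckeSeries R N) = 0 := by
  simp only [truncatedHeckeSeries, map_sum, coeff_C_mul_X_pow]
  refine sum_eq_zero fun j _ => sum_eq_zero fun r _ => if_neg ?_
  rintro rfl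
  exact heckeExponent_mod_three_ne_two j r hd

lemma qPochhammer_pow_char (R : Type*) [CommRing R] {p : ℕ} [hp : Fact p.Prime] [CharP R p]
    (k : ℕ) :
    (qPochhammer X k : R⟦X⟧) ^ p = expand p hp.out.ne_zero (qPochhammer X k) := by
  have : CharP R⟦X⟧ p := charP_of_injective_ringHom C_injective p
  simp only [qPochhammer, ← prod_pow, map_prod, map_sub, map_one, map_pow, expand_X]
  refine prod_congr rfl fun i _ => ?_
  rw [sub_pow_char, one_pow, ← pow_mul, ← pow_mul, mul_comm]

lemma coeff_mul_expand_eq_zero {R : Type*} [CommRing R] {p n : ℕ} (hp : p ≠ 0) {f : R⟦X⟧}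
    (g : R⟦X⟧) (hf : ∀ d ≤ n, d ≡ n [MOD p] → coeff d f = 0) :
    coeff n (f * expand p hp g) = 0 := by
  rw [coeff_mul]
  refine sum_eq_zero fun ⟨a, b⟩ hab => ?_
  obtain rfl := mem_antidiagonal.mp hab
  by_cases hb : p ∣ b
  · rw [hf a (Nat.le_add_right a b), zero_mul]
    exact (Nat.modEq_iff_dvd' (Nat.le_add_right a b)).mpr (by simpa using hb)
  · rw [coeff_expand_of_not_dvd p hp _ hb, mul_zero]

theorem coeff_truncatedSTSeries_eq_zero (R : Type*) [CommRing R] [CharP R 3] {n : ℕ}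
    (hn : n % 3 = 2) : coeff n (truncatedSTSeries R n) = 0 := by
  have : Fact (Nat.Prime 3) := ⟨Nat.prime_three⟩
  have hcube : truncatedSTSeries R n = truncatedSTSeries R n * qPochhammer X n ^ 3 *
      expand 3 three_ne_zero (invQPochhammer R n) := by
    rw [qPochhammer_pow_char, mul_assoc, ← map_mul, qPochhammer_mul_invQPochhammer, map_one,
      mul_one]
  rw [hcube]
  refine coeff_mul_expand_eq_zero _ _ fun d hdn hd => ?_
  have hdvd := X_pow_succ_dvd_truncatedSTSeries_mul_cube_sub_truncatedHeckeSeries R n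
  have hcoeff := X_pow_dvd_iff.mp hdvd d (Nat.lt_succ_of_le hdn)
  rw [map_sub, coeff_truncatedHeckeSeries_eq_zero R n (Eq.trans hd hn), sub_zero] at hcoeff
  exact hcoeff

end CubeModThree

section PartitionPairs

/-- The partitions of `n` all of whose parts lie in the interval `(a, b]`, as a finset of
multisets. -/
def partitionsInIoc (a b n : ℕ) : Finset (Multiset ℕ) :=
  (Nat.Partition.restricted n (· ∈ Ioc a b)).image Nat.Partition.parts

lemma mem_partitionsInIoc {a b n : ℕ} {π : Multiset ℕ} :
    π ∈ partitionsInIoc a b n ↔ (∀ x ∈ π, x ∈ Ioc a b) ∧ π.sum = n := by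
  simp only [partitionsInIoc, Nat.Partition.restricted, mem_image, mem_filter, mem_univ, true_and]
  constructor
  · rintro ⟨π, hπ, rfl⟩
    exact ⟨hπ, π.parts_sum⟩
  · rintro ⟨hπ, hsum⟩
    exact ⟨⟨π, fun hx => Nat.zero_lt_of_lt (mem_Ioc.mp (hπ _ hx)).1, hsum⟩, hπ, rfl⟩

lemma card_partitionsInIoc (a b n : ℕ) :
    #(partitionsInIoc a b n) = #(Nat.Partition.restricted n (· ∈ Ioc a b)) :=
  card_image_of_injective _ fun _ _ => Nat.Partition.ext

open scoped PowerSeries.WithPiTopology in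
lemma mk_card_partitionsInIoc (R : Type*) [CommRing R] {a b : ℕ} (h : a ≤ b) :
    PowerSeries.mk (fun n => (#(partitionsInIoc a b n) : R)) =
      qPochhammer X a * invQPochhammer R b := by
  let _ : TopologicalSpace R := ⊥
  have : DiscreteTopology R := ⟨rfl⟩
  have hmem (i : ℕ) : i + 1 ∈ Ioc a b ↔ i ∈ Ico a b := by
    simp only [mem_Ioc, mem_Ico, Nat.lt_succ_iff, Nat.succ_le_iff]
  have hprod : PowerSeries.mk (fun n => (#(partitionsInIoc a b n) : R)) =
      ∏ i ∈ Ico a b, ∑' j : ℕ, (X ^ (i + 1)) ^ j := by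
    simp_rw [card_partitionsInIoc, Nat.Partition.powerSeriesMk_card_restricted_eq_tprod, ← pow_mul]
    rw [tprod_eq_prod (s := Ico a b) fun i hi => if_neg fun h => hi ((hmem i).mp h)]
    exact prod_congr rfl fun i hi => if_pos ((hmem i).mpr hi)
  have hinv : (∏ i ∈ Ico a b, ∑' j : ℕ, ((X : R⟦X⟧) ^ (i + 1)) ^ j) *
      ∏ i ∈ Ico a b, (1 - X ^ (i + 1)) = 1 := by
    rw [← prod_mul_distrib]
    exact prod_eq_one fun i _ =>
      WithPiTopology.tsum_pow_mul_one_sub_of_constantCoeff_eq_zero (by simp)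
  have hb := qPochhammer_mul_invQPochhammer R b
  rw [← qPochhammer_mul_prod_Ico (X : R⟦X⟧) h] at hb
  rw [hprod]
  linear_combination qPochhammer X a * invQPochhammer R b * hinv -
    (∏ i ∈ Ico a b, ∑' j : ℕ, ((X : R⟦X⟧) ^ (i + 1)) ^ j) * hb

/-- The pairs of partitions `(π₁, π₂)` of total size `n`, where the parts of `π₁` lie in the
interval `(m, N]` and those of `π₂` in `(m, 2 m + 1]`. Prepending the part `m + 1` to `π₁` gives the
pairs in `𝒮𝒯` with smallest part `m + 1`. -/
def partitionPairs (m N n : ℕ) : Finset (Multiset ℕ × Multiset ℕ) :=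
  (antidiagonal n).biUnion fun d =>
    partitionsInIoc m N d.1 ×ˢ partitionsInIoc m (2 * m + 1) d.2

lemma mem_partitionPairs {m N n : ℕ} {p : Multiset ℕ × Multiset ℕ} :
    p ∈ partitionPairs m N n ↔ (∀ x ∈ p.1, x ∈ Ioc m N) ∧
      (∀ x ∈ p.2, x ∈ Ioc m (2 * m + 1)) ∧ p.1.sum + p.2.sum = n := by
  simp only [partitionPairs, mem_biUnion, HasAntidiagonal.mem_antidiagonal, mem_product,
    mem_partitionsInIoc]
  constructor
  · rintro ⟨d, rfl, ⟨h₁, hd₁⟩, h₂, hd₂⟩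
    exact ⟨h₁, h₂, by rw [hd₁, hd₂]⟩
  · rintro ⟨h₁, h₂, hsum⟩
    exact ⟨(p.1.sum, p.2.sum), hsum, ⟨h₁, rfl⟩, h₂, rfl⟩

lemma card_partitionPairs (R : Type*) [CommRing R] {m N : ℕ} (h : m ≤ N) (n : ℕ) :
    (#(partitionPairs m N n) : R) = coeff n (qPochhammer X m * invQPochhammer R N *
      (qPochhammer X m * invQPochhammer R (2 * m + 1))) := by
  have hdisj : (antidiagonal n : Set (ℕ × ℕ)).PairwiseDisjoint fun d =>
      partitionsInIoc m N d.1 ×ˢ partitionsInIoc m (2 * m + 1) d.2 := by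
    refine fun d _ e _ hde => disjoint_left.mpr fun p hd he => hde ?_
    simp only [mem_product, mem_partitionsInIoc] at hd he
    exact Prod.ext (hd.1.2.symm.trans he.1.2) (hd.2.2.symm.trans he.2.2)
  rw [← mk_card_partitionsInIoc R h, ← mk_card_partitionsInIoc R (show m ≤ 2 * m + 1 by omega),
    coeff_mul, partitionPairs, card_biUnion hdisj]
  simp only [card_product, coeff_mk, Nat.cast_sum, Nat.cast_mul]

/-- The pairs `(π₁, π₂)` in `𝒮𝒯` of total size `n` for which `π₁` has smallest part `m + 1`. -/
def stPairs (m n : ℕ) : Finset (Multiset ℕ × Multiset ℕ) :=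
  (partitionPairs m n (n - (m + 1))).image (Prod.map (Multiset.cons (m + 1)) id)

lemma mem_stPairs {m n : ℕ} (hmn : m < n) {p : Multiset ℕ × Multiset ℕ} :
    p ∈ stPairs m n ↔ (m + 1 ∈ p.1 ∧ (∀ x ∈ p.1, m < x) ∧ ∀ x ∈ p.2, x ∈ Ioc m (2 * m + 1)) ∧
      p.1.sum + p.2.sum = n := by
  simp only [stPairs, mem_image, mem_partitionPairs]
  constructor
  · rintro ⟨⟨π, ρ⟩, ⟨hπ, hρ, hsum⟩, rfl⟩
    refine ⟨⟨Multiset.mem_cons_self _ _, Multiset.forall_mem_cons.mpr ⟨m.lt_succ_self, ?_⟩, hρ⟩, ?_⟩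
    · exact fun x hx => (mem_Ioc.mp (hπ x hx)).1
    · simp only [Prod.map_fst, Prod.map_snd, Multiset.sum_cons, id] at hsum ⊢
      omega
  · rintro ⟨⟨hm, hlt, h⟩, hsum⟩
    obtain ⟨π, hπ⟩ := Multiset.exists_cons_of_mem hm
    rw [hπ, Multiset.sum_cons] at hsum
    refine ⟨(π, p.2), ⟨fun x (hx : x ∈ π) => mem_Ioc.mpr ⟨?_, ?_⟩, h, by dsimp only; omega⟩, ?_⟩
    · exact hlt x (hπ ▸ Multiset.mem_cons_of_mem hx)
    · have := Multiset.le_sum_of_mem hx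
      omega
    · exact Prod.ext hπ.symm rfl

lemma card_stPairs (R : Type*) [CommRing R] {m n : ℕ} (hmn : m < n) :
    (#(stPairs m n) : R) = coeff n (X ^ (m + 1) * (qPochhammer X m * invQPochhammer R n *
      (qPochhammer X m * invQPochhammer R (2 * m + 1)))) := by
  have hinj : Function.Injective (Multiset.cons (m + 1)) :=
    fun _ _ => (Multiset.cons_inj_right _).mp
  rw [stPairs, card_image_of_injective _ (hinj.prodMap Function.injective_id),
    card_partitionPairs R hmn.le, coeff_X_pow_mul', if_pos (Nat.succ_le_of_lt hmn)]

lemma le_sPart {b : ℕ∞} {π : Multiset ℕ} : b ≤ sPart π ↔ ∀ x ∈ π, b ≤ (x : ℕ∞) := by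
  -- In `sPart` the cast is elaborated as a monadic coercion of `π` itself to `Multiset ℕ∞`.
  simp [sPart, Multiset.le_inf, bind, pure]

lemma sPart_eq_of_forall_le {m : ℕ} {π : Multiset ℕ} (hm : m ∈ π) (hle : ∀ x ∈ π, m ≤ x) :
    sPart π = m :=
  le_antisymm (le_sPart.mp le_rfl m hm) (le_sPart.mpr fun x hx => Nat.cast_le.mpr (hle x hx))

lemma inST_iff_forall_mem_Ioc {m : ℕ} {p : Multiset ℕ × Multiset ℕ} (hm : m + 1 ∈ p.1)
    (hlt : ∀ x ∈ p.1, m < x) : InST p ↔ ∀ x ∈ p.2, x ∈ Ioc m (2 * m + 1) := by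
  have hle : ((m + 1 : ℕ) : ℕ∞) ≤ sPart p.2 ↔ ∀ x ∈ p.2, m < x := by
    simp only [le_sPart, Nat.cast_le, Nat.succ_le_iff]
  have hlt' : (lPart p.2 : ℕ∞) < 2 * ((m + 1 : ℕ) : ℕ∞) ↔ ∀ x ∈ p.2, x ≤ 2 * m + 1 := by
    rw [← Multiset.sup_le, ← lPart, ← Nat.lt_succ_iff]
    exact_mod_cast Iff.rfl
  rw [InST, sPart_eq_of_forall_le hm hlt, hle, hlt']
  simp only [mem_Ioc]
  constructor
  · rintro ⟨-, -, -, h₁, h₂⟩ x hx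
    exact ⟨h₁ x hx, h₂ x hx⟩
  · intro h
    exact ⟨fun x hx => Nat.zero_lt_of_lt (hlt x hx), fun x hx => Nat.zero_lt_of_lt (h x hx).1,
      fun h₀ => Multiset.notMem_zero _ (h₀ ▸ hm), fun x hx => (h x hx).1, fun x hx => (h x hx).2⟩

lemma inST_iff {p : Multiset ℕ × Multiset ℕ} :
    InST p ↔ ∃ m, m + 1 ∈ p.1 ∧ (∀ x ∈ p.1, m < x) ∧ ∀ x ∈ p.2, x ∈ Ioc m (2 * m + 1) := by
  constructor
  · intro hp
    obtain ⟨s, hs, hmin⟩ :=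
      exists_min_image p.1.toFinset id (Multiset.toFinset_nonempty.mpr hp.2.2.1)
    simp only [Multiset.mem_toFinset, id] at hs hmin
    obtain ⟨m, rfl⟩ := Nat.exists_eq_succ_of_ne_zero (hp.1 s hs).ne'
    exact ⟨m, hs, hmin, (inST_iff_forall_mem_Ioc hs hmin).mp hp⟩
  · rintro ⟨m, hm, hlt, h⟩
    exact (inST_iff_forall_mem_Ioc hm hlt).mpr h

lemma setOf_inST_eq_biUnion (n : ℕ) :
    {p : Multiset ℕ × Multiset ℕ | InST p ∧ p.1.sum + p.2.sum = n} =
      ((range n).biUnion fun m => stPairs m n : Finset _) := by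
  ext p
  simp only [Set.mem_ofPred_eq, inST_iff, mem_coe, mem_biUnion, mem_range]
  constructor
  · rintro ⟨⟨m, hm, h⟩, hsum⟩
    have hmn : m < n := by
      have := Multiset.le_sum_of_mem hm
      omega
    exact ⟨m, hmn, (mem_stPairs hmn).mpr ⟨⟨hm, h⟩, hsum⟩⟩
  · rintro ⟨m, hmn, hp⟩
    obtain ⟨h, hsum⟩ := (mem_stPairs hmn).mp hp
    exact ⟨⟨m, h⟩, hsum⟩

theorem sT_eq_coeff_truncatedSTSeries (R : Type*) [CommRing R] (n : ℕ) :
    (sT n : R) = coeff n (truncatedSTSeries R n) := by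
  have hdisj : (range n : Set ℕ).PairwiseDisjoint fun m => stPairs m n := by
    refine fun m hm k hk hmk => disjoint_left.mpr fun p hpm hpk => hmk ?_
    obtain ⟨⟨hm_mem, hm_lt, -⟩, -⟩ := (mem_stPairs (mem_range.mp hm)).mp hpm
    obtain ⟨⟨hk_mem, hk_lt, -⟩, -⟩ := (mem_stPairs (mem_range.mp hk)).mp hpk
    exact le_antisymm (Nat.le_of_lt_succ (hm_lt _ hk_mem)) (Nat.le_of_lt_succ (hk_lt _ hm_mem))
  rw [sT, setOf_inST_eq_biUnion, Set.ncard_coe_finset, card_biUnion hdisj, truncatedSTSeries,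
    map_sum, Nat.cast_sum]
  exact sum_congr rfl fun m hm => card_stPairs R (mem_range.mp hm)

end PartitionPairs

theorem sT_three_n_plus_two_mod_three (n : ℕ) : 3 ∣ sT (3 * n + 2) := by
  rw [← ZMod.natCast_eq_zero_iff, sT_eq_coeff_truncatedSTSeries]
  exact coeff_truncatedSTSeries_eq_zero (ZMod 3) (by omega)
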